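/- arXiv:1810.05707 — 2 statements merged into one kernel-verified Lean document; each statement's English description precedes it below -/
import Mathlib

section
/- Fix 1 < p < ∞, natural numbers l_1,…,l_{d+1}, and let T be the (l_1,…,l_{d+1}) interval tree with levels Λ_0,…,Λ_{d+1}. Suppose 0 < Δ, ν < 1, λ, Θ > 0, M > 1, and (r_I)_{I∈T}, (s_I)_{I∈T} ⊂ [0,∞) are such that (i) r_I ≤ λ·s_I for each I ∈ T; (ii) r_I ≤ ∑_{J⁻=I} r_J and s_I ≤ ∑_{J⁻=I} s_J for each I ∈ T \ Λ_{d+1}; (iii) max_{I∈Λ_j} s_I ≤ M·min_{I∈Λ_j} s_I for all 0 ≤ j ≤ d; (iv) Δ·M^p ≤ ν·Θ^p/(2λ^p); and (v) r_{[L]}^p > (1−ν/2)·Θ^p·(∏_{i=1}^{d+1} l_i^{p−1})·∑_{I∈Λ_{d+1}} s_I^p. Then for every 0 ≤ j < d, |{I ∈ Λ_j : r_I^p ≤ (1−ν)·Θ^p·l_{j+1}^{p−1}·∑_{J⁻=I} s_J^p}| < (1−Δ)·|Λ_j|. -/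
/-!
Write `S_j(x) = ∑_{I ∈ Λ_j} x_I ^ p`. If `x ≥ 0` satisfies `x_I ≤ ∑_{J⁻ = I} x_J`, Hölder's
inequality on the children of each node gives `S_j(x) ≤ l_{j+1}^{p-1} S_{j+1}(x)`
(`levelPow_le_succ`), so `(∏_{i ≤ j} l_i^{p-1}) S_j(x)` is nondecreasing in `j`
(`weighted_levelPow_mono`).

Suppose that at least `(1-Δ)|Λ_j|` nodes of level `j` are bad, meaning
`r_I^p ≤ (1-ν) Θ^p l_{j+1}^{p-1} ∑_{J⁻ = I} s_J^p`, so that the set `G` of remaining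
nodes has at most `Δ|Λ_j|` elements. The bad nodes contribute at most
`(1-ν) Θ^p l_{j+1}^{p-1} S_{j+1}(s)` to `S_j(r)`. By the comparability `h3`
of the `s_I` within a level, together with `h1` and `h4`, `G` contributes at most
`λ^p ∑_G s_I^p ≤ λ^p Δ M^p S_j(s) ≤ (ν/2) Θ^p l_{j+1}^{p-1} S_{j+1}(s)`.
Hence `S_j(r) ≤ (1-ν/2) Θ^p l_{j+1}^{p-1} S_{j+1}(s)`, and monotonicity of the weighted sums, for `r`
from level `0` to `j` and for `s` from level `j+1` to `d+1`, contradicts `h5`.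
-/

open Finset

noncomputable section

/-!
The `(l 1, …, l (d+1))` interval tree is encoded as follows: the nodes at level `j`
(for `0 ≤ j ≤ d+1`) are indexed by the natural numbers `k < levN l j`, where
`levN l j = l 1 * ⋯ * l j` is the cardinality of the `j`-th level `Λ_j`.  The children of the
node `k` at level `j` are the nodes `k * l (j+1) + t`, `t < l (j+1)`, at level `j+1`, and the
root (the interval `[L]`) is the node `0` at level `0`.  A family `(x_I)_{I ∈ T}` of reals
indexed by the tree is encoded as `x : ℕ → ℕ → ℝ`, with `x j k` the value at node `k` of
level `j`.
-/

/-- Cardinality of the `j`-th level `Λ_j` of the interval tree. -/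
def levN (l : ℕ → ℕ) (j : ℕ) : ℕ := ∏ i ∈ Finset.Icc 1 j, l i

/-- `∑_{J⁻ = I} x_J`, the sum of `x` over the children of node `k` at level `j`. -/
def childSum (l : ℕ → ℕ) (x : ℕ → ℕ → ℝ) (j k : ℕ) : ℝ :=
  ∑ t ∈ Finset.range (l (j + 1)), x (j + 1) (k * l (j + 1) + t)

/-- `∑_{J⁻ = I} x_J ^ p`, the sum of `x^p` over the children of node `k` at level `j`. -/
def childSumPow (l : ℕ → ℕ) (x : ℕ → ℕ → ℝ) (p : ℝ) (j k : ℕ) : ℝ :=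
  ∑ t ∈ Finset.range (l (j + 1)), x (j + 1) (k * l (j + 1) + t) ^ p

/-- `∑_{I ∈ Λ_j} x_I ^ p`, the sum of `x^p` over the whole level `j`. -/
def levelPow (l : ℕ → ℕ) (x : ℕ → ℕ → ℝ) (p : ℝ) (j : ℕ) : ℝ :=
  ∑ k ∈ Finset.range (levN l j), x j k ^ p

lemma levN_succ (l : ℕ → ℕ) (j : ℕ) : levN l (j + 1) = levN l j * l (j + 1) := by
  unfold levN
  rw [Finset.prod_Icc_succ_top (by omega)]

lemma sum_range_mul_blocks (f : ℕ → ℝ) (n m : ℕ) :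
    ∑ k ∈ Finset.range n, ∑ t ∈ Finset.range m, f (k * m + t)
      = ∑ k ∈ Finset.range (n * m), f k := by
  induction n with
  | zero => simp
  | succ n ih => rw [Finset.sum_range_succ, ih, Nat.succ_mul, Finset.sum_range_add]

lemma sum_childSumPow (l : ℕ → ℕ) (x : ℕ → ℕ → ℝ) (p : ℝ) (j : ℕ) :
    ∑ k ∈ Finset.range (levN l j), childSumPow l x p j k = levelPow l x p (j + 1) := by
  unfold childSumPow levelPow
  rw [levN_succ, ← sum_range_mul_blocks]

lemma child_lt {l : ℕ → ℕ} {j k t : ℕ} (hk : k < levN l j) (ht : t < l (j + 1)) :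
    k * l (j + 1) + t < levN l (j + 1) := by
  rw [levN_succ]
  nlinarith [Nat.mul_le_mul_right (l (j + 1)) (Nat.succ_le_of_lt hk)]

/-- Hölder's inequality on the children of each node of level `j`. -/
lemma levelPow_le_succ {p : ℝ} (hp : 1 < p) (l : ℕ → ℕ) (x : ℕ → ℕ → ℝ) (j : ℕ)
    (h0 : ∀ k < levN l j, 0 ≤ x j k) (h0' : ∀ k < levN l (j + 1), 0 ≤ x (j + 1) k)
    (hx : ∀ k < levN l j, x j k ≤ childSum l x j k) :
    levelPow l x p j ≤ (l (j + 1) : ℝ) ^ (p - 1) * levelPow l x p (j + 1) := by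
  rw [← sum_childSumPow, Finset.mul_sum]
  refine Finset.sum_le_sum fun k hk => ?_
  rw [Finset.mem_range] at hk
  refine (Real.rpow_le_rpow (h0 k hk) (hx k hk) (by linarith)).trans ?_
  have h := Real.rpow_sum_le_const_mul_sum_rpow_of_nonneg (Finset.range (l (j + 1)))
    (f := fun t => x (j + 1) (k * l (j + 1) + t)) hp.le
    (fun t ht => h0' _ (child_lt hk (Finset.mem_range.1 ht)))
  rwa [Finset.card_range] at h

lemma weighted_levelPow_mono {p : ℝ} (hp : 1 < p) (d : ℕ) (l : ℕ → ℕ) (x : ℕ → ℕ → ℝ)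
    (h0 : ∀ j ≤ d + 1, ∀ k < levN l j, 0 ≤ x j k)
    (hx : ∀ j ≤ d, ∀ k < levN l j, x j k ≤ childSum l x j k)
    {i j : ℕ} (hij : i ≤ j) (hj : j ≤ d + 1) :
    (∏ a ∈ Finset.Icc 1 i, (l a : ℝ) ^ (p - 1)) * levelPow l x p i
      ≤ (∏ a ∈ Finset.Icc 1 j, (l a : ℝ) ^ (p - 1)) * levelPow l x p j := by
  induction j, hij using Nat.le_induction with
  | base => exact le_rfl
  | succ n hn ih =>
    refine (ih (by omega)).trans ?_
    rw [Finset.prod_Icc_succ_top (by omega), mul_assoc]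
    exact mul_le_mul_of_nonneg_left
      (levelPow_le_succ hp l x n (h0 n (by omega)) (h0 (n + 1) hj) (hx n (by omega)))
      (Finset.prod_nonneg fun a _ => by positivity)

/-- If `u_g ≤ C u_k` for all `g, k`, a subset of proportion at most `δ` carries at most the
proportion `δ C` of the total sum of `u`. -/
lemma sum_subset_le {n : ℕ} (hn : 0 < n) {u : ℕ → ℝ} {C δ : ℝ} {G : Finset ℕ}
    (hG : G ⊆ Finset.range n) (hC : 0 ≤ C) (hu0 : ∀ k < n, 0 ≤ u k)
    (hu : ∀ g < n, ∀ k < n, u g ≤ C * u k) (hcard : (G.card : ℝ) ≤ δ * n) :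
    ∑ g ∈ G, u g ≤ δ * C * ∑ k ∈ Finset.range n, u k := by
  set S := ∑ k ∈ Finset.range n, u k with hS
  have hS0 : 0 ≤ S := Finset.sum_nonneg fun k hk => hu0 k (Finset.mem_range.1 hk)
  have hn' : (0 : ℝ) < n := by exact_mod_cast hn
  have key : ∀ g ∈ G, (n : ℝ) * u g ≤ C * S := by
    intro g hg
    have := Finset.sum_le_sum fun k (hk : k ∈ Finset.range n) =>
      hu g (Finset.mem_range.1 (hG hg)) k (Finset.mem_range.1 hk)
    simpa [hS, Finset.mul_sum] using this
  have h : (n : ℝ) * ∑ g ∈ G, u g ≤ G.card * (C * S) := by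
    rw [Finset.mul_sum]
    simpa using Finset.sum_le_sum key
  have h' : (G.card : ℝ) * (C * S) ≤ δ * n * (C * S) :=
    mul_le_mul_of_nonneg_right hcard (by positivity)
  refine le_of_mul_le_mul_left ?_ hn'
  linarith

open Classical in
/-- Lemma 3.5: on each level `j < d`, fewer than `(1−Δ)|Λ_j|` of the nodes fail the
comparison `r_I^p > (1−ν)Θ^p l_{j+1}^{p−1} ∑_{J⁻=I} s_J^p`. -/
theorem YtoX_lemma (p : ℝ) (hp : 1 < p) (d : ℕ) (l : ℕ → ℕ)
    (hl : ∀ i ∈ Finset.Icc 1 (d + 1), 0 < l i)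
    (Δ ν : ℝ) (hΔ : 0 < Δ) (hΔ1 : Δ < 1) (hν : 0 < ν) (hν1 : ν < 1)
    (lam Θ : ℝ) (hlam : 0 < lam) (hΘ : 0 < Θ) (M : ℝ) (hM : 1 < M)
    (r s : ℕ → ℕ → ℝ)
    (hnonneg : ∀ j ≤ d + 1, ∀ k < levN l j, 0 ≤ r j k ∧ 0 ≤ s j k)
    (h1 : ∀ j ≤ d + 1, ∀ k < levN l j, r j k ≤ lam * s j k)
    (h2 : ∀ j ≤ d, ∀ k < levN l j, r j k ≤ childSum l r j k ∧ s j k ≤ childSum l s j k)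
    (h3 : ∀ j ≤ d, ∀ k < levN l j, ∀ k' < levN l j, s j k ≤ M * s j k')
    (h4 : Δ * M ^ p ≤ ν * Θ ^ p / (2 * lam ^ p))
    (h5 : r 0 0 ^ p > (1 - ν / 2) * Θ ^ p *
      (∏ i ∈ Finset.Icc 1 (d + 1), (l i : ℝ) ^ (p - 1)) *
      ∑ k ∈ Finset.range (levN l (d + 1)), s (d + 1) k ^ p) :
    ∀ j < d,
      ((((Finset.range (levN l j)).filter fun k =>
          r j k ^ p ≤ (1 - ν) * Θ ^ p * (l (j + 1) : ℝ) ^ (p - 1) * childSumPow l s p j k).card : ℝ))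
        < (1 - Δ) * (levN l j : ℝ) := by
  intro j hj
  by_contra hcon
  push Not at hcon
  set c : ℝ := (l (j + 1) : ℝ) ^ (p - 1) with hc
  set P : ℕ → Prop := fun k =>
    r j k ^ p ≤ (1 - ν) * Θ ^ p * c * childSumPow l s p j k with hP
  have hp0 : 0 ≤ p := by linarith
  have hc0 : 0 ≤ c := by positivity
  have hΘp : 0 < Θ ^ p := by positivity
  have hlp : 0 < lam ^ p := by positivity
  have hMp : 0 < M ^ p := by positivity
  have hN : 0 < levN l j := Finset.prod_pos fun i hi => hl i (by
    rw [Finset.mem_Icc] at hi ⊢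
    omega)
  have hs0 : ∀ k < levN l j, 0 ≤ s j k := fun k hk => (hnonneg j (by omega) k hk).2
  have hs1 : levelPow l s p j ≤ c * levelPow l s p (j + 1) :=
    levelPow_le_succ hp l s j hs0 (fun k hk => (hnonneg (j + 1) (by omega) k hk).2)
      (fun k hk => (h2 j (by omega) k hk).2)
  have hS0 : 0 ≤ levelPow l s p (j + 1) := Finset.sum_nonneg fun k hk =>
    Real.rpow_nonneg (hnonneg (j + 1) (by omega) k (Finset.mem_range.1 hk)).2 _
  have hchild0 : ∀ k < levN l j, 0 ≤ childSumPow l s p j k := fun k hk =>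
    Finset.sum_nonneg fun t ht => Real.rpow_nonneg
      (hnonneg (j + 1) (by omega) _ (child_lt hk (Finset.mem_range.1 ht))).2 _
  have hbad : ∑ k ∈ (Finset.range (levN l j)).filter P, r j k ^ p
      ≤ (1 - ν) * Θ ^ p * c * levelPow l s p (j + 1) := by
    rw [← sum_childSumPow, Finset.mul_sum]
    refine (Finset.sum_le_sum fun k hk => (Finset.mem_filter.1 hk).2).trans ?_
    refine Finset.sum_le_sum_of_subset_of_nonneg (Finset.filter_subset _ _) fun k hk _ => ?_
    have := hchild0 k (Finset.mem_range.1 hk)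
    have : 0 ≤ 1 - ν := by linarith
    positivity
  have hcard : (((Finset.range (levN l j)).filter fun k => ¬ P k).card : ℝ)
      ≤ Δ * (levN l j : ℝ) := by
    have h := Finset.card_filter_add_card_filter_not (s := Finset.range (levN l j)) P
    rw [Finset.card_range] at h
    have h' : (((Finset.range (levN l j)).filter P).card : ℝ)
        + ((Finset.range (levN l j)).filter fun k => ¬ P k).card = levN l j := by
      exact_mod_cast h
    linarith
  have hsG := sum_subset_le (u := fun k => s j k ^ p) hN (Finset.filter_subset _ _) hMp.le
    (fun k hk => Real.rpow_nonneg (hs0 k hk) _)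
    (fun g hg k hk => by
      rw [← Real.mul_rpow (by linarith) (hs0 k hk)]
      exact Real.rpow_le_rpow (hs0 g hg) (h3 j (by omega) g hg k hk) hp0) hcard
  have hgood : ∑ k ∈ (Finset.range (levN l j)).filter (fun k => ¬ P k), r j k ^ p
      ≤ lam ^ p * (Δ * M ^ p * levelPow l s p j) := by
    refine le_trans ?_ (mul_le_mul_of_nonneg_left hsG hlp.le)
    rw [Finset.mul_sum]
    refine Finset.sum_le_sum fun k hk => ?_
    have hk := Finset.mem_range.1 (Finset.mem_filter.1 hk).1
    rw [← Real.mul_rpow hlam.le (hs0 k hk)]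
    exact Real.rpow_le_rpow (hnonneg j (by omega) k hk).1 (h1 j (by omega) k hk) hp0
  have hcoef : lam ^ p * (Δ * M ^ p) ≤ ν / 2 * Θ ^ p := by
    rw [le_div_iff₀ (by positivity)] at h4
    linarith
  have hgood' : lam ^ p * (Δ * M ^ p * levelPow l s p j)
      ≤ ν / 2 * Θ ^ p * (c * levelPow l s p (j + 1)) := by
    rw [← mul_assoc]
    refine (mul_le_mul_of_nonneg_left hs1 (by positivity)).trans ?_
    exact mul_le_mul_of_nonneg_right hcoef (by positivity)
  have hr : levelPow l r p j ≤ (1 - ν / 2) * Θ ^ p * (c * levelPow l s p (j + 1)) := by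
    have h : levelPow l r p j = _ :=
      (Finset.sum_filter_add_sum_filter_not (Finset.range (levN l j)) P _).symm
    rw [h]
    linarith
  have hroot := weighted_levelPow_mono hp d l r (fun j hj k hk => (hnonneg j hj k hk).1)
    (fun j hj k hk => (h2 j hj k hk).1) (Nat.zero_le j) (by omega)
  have htop := weighted_levelPow_mono hp d l s (fun j hj k hk => (hnonneg j hj k hk).2)
    (fun j hj k hk => (h2 j hj k hk).2) (i := j + 1) (j := d + 1) (by omega) le_rfl
  have hroot0 : (∏ a ∈ Finset.Icc 1 0, (l a : ℝ) ^ (p - 1)) * levelPow l r p 0 = r 0 0 ^ p := by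
    simp [levelPow, levN]
  rw [hroot0] at hroot
  rw [Finset.prod_Icc_succ_top (by omega), ← hc] at htop
  set A : ℝ := ∏ a ∈ Finset.Icc 1 j, (l a : ℝ) ^ (p - 1) with hA
  have hA0 : 0 ≤ A := Finset.prod_nonneg fun a _ => by positivity
  have hν2 : 0 ≤ (1 - ν / 2) * Θ ^ p := mul_nonneg (by linarith) hΘp.le
  have hfin := mul_le_mul_of_nonneg_left hr hA0
  have hfin' := mul_le_mul_of_nonneg_left htop hν2
  unfold levelPow at hfin' hroot hfin
  linarith
end
end

section
/- Let 𝓕 be a uniformly Lipschitz family of maps between metric spaces with λ = sup_{F∈𝓕} Lip(F) ∈ (0,∞). Let l, m ∈ ℕ with m > l, and write m = kl + r where k ∈ ℕ and 0 ≤ r < l. Then a_m(𝓕) ≤ a_l(𝓕)·m/(lk) + 2λr/m. -/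
/-!
Given `f : 2^m → X` and `η ∈ 2^m`, restrict `f` to an `l`-dimensional subcube through `η`: a point
`ε ∈ 2^l` is repeated over the first `k` blocks of length `l` and flips the coordinates of `η`
accordingly, while the last `r` coordinates are untouched. This embedding of `2^l` into `2^m`
contracts the normalized metric by `kl/m`, so the restriction has Lipschitz constant at most
`Lip(f)·kl/m`. Applying the inequality defining `a_l` to every restriction and averaging over `η`,
translation invariance of the uniform measure bounds the mean displacement under flipping the first
`kl` coordinates (`sum_flip_le`). Flipping the remaining `r` coordinates costs at most
`λ·Lip(f)·r/m`. Hence `a_m ≤ a_l·kl/m + λr/m`, which is stronger than the claim since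
`kl/m ≤ 1 ≤ m/(kl)`.
-/

open Finset

noncomputable section

/-- Normalized Hamming distance on the cube `{±1}^n` (modeled as `Fin n → Bool`). -/
def hdist (n : ℕ) (ε δ : Fin n → Bool) : ℝ :=
  ((Finset.univ.filter fun i => ε i ≠ δ i).card : ℝ) / n

/-- `-ε`: flip all coordinates. -/
def negCube {n : ℕ} (ε : Fin n → Bool) : Fin n → Bool := fun i => !(ε i)

/-- `d_i ε`: flip the `i`-th coordinate. -/
def flipCoord {n : ℕ} (i : Fin n) (ε : Fin n → Bool) : Fin n → Bool :=
  Function.update ε i (!(ε i))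

/-- Expectation with respect to the uniform probability measure on the cube. -/
def cubeE (n : ℕ) (Φ : (Fin n → Bool) → ℝ) : ℝ :=
  (∑ ε : Fin n → Bool, Φ ε) / 2 ^ n

/-- Lipschitz constant of a map from the cube (with metric `hdist`) into a metric space,
with the convention `0 / 0 = 0`. -/
def cubeLip {n : ℕ} {X : Type} [MetricSpace X] (f : (Fin n → Bool) → X) : ℝ :=
  sSup { r : ℝ | ∃ ε δ, r = dist (f ε) (f δ) / hdist n ε δ }

/-- A map between (bundled) metric spaces. -/
structure MetricMap where
  X : Type
  Y : Type
  mX : MetricSpace X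
  mY : MetricSpace Y
  F : X → Y

attribute [instance] MetricMap.mX MetricMap.mY

/-- `a_n(𝓕)`: infimum of those `a > 0` such that for each `F : X → Y` in `𝓕` and each
`f : 2^n → X`, `𝔼 ϱ_Y^f(ε,−ε) ≤ a·Lip(f)`. -/
def aConst (𝓕 : Set MetricMap) (n : ℕ) : ℝ :=
  sInf { a : ℝ | 0 < a ∧ ∀ G ∈ 𝓕, ∀ f : (Fin n → Bool) → G.X,
    cubeE n (fun ε => dist (G.F (f ε)) (G.F (f (negCube ε)))) ≤ a * cubeLip f }

/-- `b_{p,n}(𝓕)`: infimum of those `b > 0` such that for each `F : X → Y` in `𝓕` and each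
`f : 2^n → X`, `𝔼 ϱ_Y^f(ε,−ε)^p ≤ b^p n^{p−1} ∑_i 𝔼 ϱ_X^f(ε,d_iε)^p`. -/
def bConst (𝓕 : Set MetricMap) (p : ℝ) (n : ℕ) : ℝ :=
  sInf { b : ℝ | 0 < b ∧ ∀ G ∈ 𝓕, ∀ f : (Fin n → Bool) → G.X,
    cubeE n (fun ε => dist (G.F (f ε)) (G.F (f (negCube ε))) ^ p)
      ≤ b ^ p * (n : ℝ) ^ (p - 1) *
        ∑ i : Fin n, cubeE n (fun ε => dist (f ε) (f (flipCoord i ε)) ^ p) }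

/-! ### Lipschitz constants on the cube -/

lemma hdist_nonneg (n : ℕ) (ε δ : Fin n → Bool) : 0 ≤ hdist n ε δ := by
  unfold hdist; positivity

lemma hdist_le_one (n : ℕ) (ε δ : Fin n → Bool) : hdist n ε δ ≤ 1 := by
  unfold hdist
  apply div_le_one_of_le₀ _ (by positivity)
  have h := Finset.card_filter_le (Finset.univ : Finset (Fin n)) (fun i => ε i ≠ δ i)
  rw [Finset.card_univ, Fintype.card_fin] at h
  exact_mod_cast h

lemma hdist_pos {n : ℕ} {ε δ : Fin n → Bool} (h : ε ≠ δ) : 0 < hdist n ε δ := by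
  obtain ⟨i, hi⟩ := Function.ne_iff.1 h
  have hn : 0 < n := i.pos
  have hc : 0 < (Finset.univ.filter fun i => ε i ≠ δ i).card :=
    Finset.card_pos.2 ⟨i, by simpa using hi⟩
  unfold hdist
  positivity

/-- The supremum defining `cubeLip f` is over a finite set, so it is a genuine one. -/
lemma dist_le_cubeLip {n : ℕ} {X : Type} [MetricSpace X] (f : (Fin n → Bool) → X)
    (ε δ : Fin n → Bool) : dist (f ε) (f δ) ≤ cubeLip f * hdist n ε δ := by
  by_cases h : ε = δ
  · subst h; simp [hdist]
  · rw [← div_le_iff₀ (hdist_pos h)]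
    refine le_csSup (Set.Finite.bddAbove ?_) ⟨ε, δ, rfl⟩
    refine (Set.finite_range fun p : (Fin n → Bool) × (Fin n → Bool) =>
      dist (f p.1) (f p.2) / hdist n p.1 p.2).subset ?_
    rintro x ⟨a, b, rfl⟩
    exact ⟨(a, b), rfl⟩

lemma cubeLip_nonneg {n : ℕ} {X : Type} [MetricSpace X] (f : (Fin n → Bool) → X) :
    0 ≤ cubeLip f := by
  apply Real.sSup_nonneg
  rintro x ⟨a, b, rfl⟩
  exact div_nonneg dist_nonneg (hdist_nonneg _ _ _)

lemma cubeLip_le {n : ℕ} {X : Type} [MetricSpace X] (f : (Fin n → Bool) → X) {C : ℝ}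
    (hC : 0 ≤ C) (h : ∀ ε δ, dist (f ε) (f δ) ≤ C * hdist n ε δ) : cubeLip f ≤ C := by
  apply Real.sSup_le _ hC
  rintro x ⟨a, b, rfl⟩
  exact div_le_of_le_mul₀ (hdist_nonneg _ _ _) hC (h a b)

lemma cubeE_le {n : ℕ} {Φ : (Fin n → Bool) → ℝ} {C : ℝ} (h : ∀ ε, Φ ε ≤ C) :
    cubeE n Φ ≤ C := by
  unfold cubeE
  rw [div_le_iff₀ (by positivity)]
  calc ∑ ε, Φ ε ≤ ∑ _ε : Fin n → Bool, C := Finset.sum_le_sum fun ε _ => h ε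
    _ = C * 2 ^ n := by simp [mul_comm]

/-- `a_n` is an infimum over a nonempty set: the uniform Lipschitz bound is admissible. -/
lemma lam_admissible {𝓕 : Set MetricMap} {lam : ℝ} (hlam : 0 < lam)
    (hLip : ∀ G ∈ 𝓕, ∀ x y : G.X, dist (G.F x) (G.F y) ≤ lam * dist x y) (n : ℕ) :
    ∀ G ∈ 𝓕, ∀ f : (Fin n → Bool) → G.X,
      cubeE n (fun ε => dist (G.F (f ε)) (G.F (f (negCube ε)))) ≤ lam * cubeLip f := by
  intro G hG f
  refine cubeE_le fun ε => (hLip G hG _ _).trans ?_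
  refine mul_le_mul_of_nonneg_left ((dist_le_cubeLip f _ _).trans ?_) hlam.le
  exact mul_le_of_le_one_right (cubeLip_nonneg f) (hdist_le_one _ _ _)

/-! ### Repeating a point of the small cube over blocks -/

/-- The point of `2^m` obtained by flipping `η` on the first `k` blocks of length `l` according to
the `k`-fold repetition of `ε ∈ 2^l`; coordinates from `k * l` on are left alone. -/
def blockFlip {l m : ℕ} (hl : 0 < l) (k : ℕ) (η : Fin m → Bool) (ε : Fin l → Bool) :
    Fin m → Bool :=
  fun i => xor (η i) (decide (i.val < k * l) && ε ⟨i.val % l, Nat.mod_lt _ hl⟩)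

/-- Flip the first `K` coordinates. -/
def flipInitial {m : ℕ} (K : ℕ) (η : Fin m → Bool) : Fin m → Bool :=
  fun i => xor (η i) (decide (i.val < K))

/-- Each coordinate of `2^l` is repeated at most `k` times. -/
lemma hdist_blockFlip_le {l m : ℕ} (hl : 0 < l) (k : ℕ) (η : Fin m → Bool)
    (ε δ : Fin l → Bool) :
    hdist m (blockFlip hl k η ε) (blockFlip hl k η δ) ≤ (k * l / m : ℝ) * hdist l ε δ := by
  have key : (Finset.univ.filter fun i => blockFlip hl k η ε i ≠ blockFlip hl k η δ i).card
      ≤ k * (Finset.univ.filter fun j => ε j ≠ δ j).card := by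
    refine Finset.card_le_mul_card_image_of_maps_to
      (f := fun i : Fin m => (⟨i.val % l, Nat.mod_lt _ hl⟩ : Fin l)) ?_ k ?_
    · intro i hi
      simp only [Finset.mem_filter, Finset.mem_univ, true_and] at hi ⊢
      intro h
      exact hi (by simp [blockFlip, h])
    · intro j _
      -- Within a fibre of `i ↦ i % l`, an index is determined by its block `i / l < k`.
      calc _ ≤ (Finset.range k).card := by
            refine Finset.card_le_card_of_injOn (fun i : Fin m => i.val / l) ?_ ?_
            · intro i hi
              simp only [Finset.coe_filter, Finset.mem_filter, Finset.mem_univ, true_and,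
                Set.mem_ofPred_eq, Finset.coe_range, Set.mem_Iio] at hi ⊢
              rw [Nat.div_lt_iff_lt_mul hl]
              by_contra hlt
              exact hi.1 (by simp [blockFlip, hlt])
            · intro i hi i' hi' h
              simp only [Finset.coe_filter, Finset.mem_filter, Finset.mem_univ, true_and,
                Set.mem_ofPred_eq] at hi hi' h
              have h1 : i.val % l = i'.val % l := congrArg Fin.val (hi.2.trans hi'.2.symm)
              ext
              rw [← Nat.div_add_mod i.val l, ← Nat.div_add_mod i'.val l, h, h1]
        _ = k := Finset.card_range k
  have key' : ((Finset.univ.filter fun i => blockFlip hl k η ε i ≠ blockFlip hl k η δ i).card : ℝ)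
      ≤ k * (Finset.univ.filter fun j => ε j ≠ δ j).card := by exact_mod_cast key
  have hl' : (l : ℝ) ≠ 0 := by positivity
  calc hdist m (blockFlip hl k η ε) (blockFlip hl k η δ)
      ≤ (k * (Finset.univ.filter fun j => ε j ≠ δ j).card : ℝ) / m := by
        unfold hdist; gcongr
    _ = _ := by unfold hdist; field_simp

lemma blockFlip_blockFlip {l m : ℕ} (hl : 0 < l) (k : ℕ) (η : Fin m → Bool)
    (ε : Fin l → Bool) : blockFlip hl k (blockFlip hl k η ε) ε = η := by
  funext i; simp [blockFlip]

lemma blockFlip_negCube {l m : ℕ} (hl : 0 < l) (k : ℕ) (η : Fin m → Bool)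
    (ε : Fin l → Bool) :
    blockFlip hl k η (negCube ε) = flipInitial (k * l) (blockFlip hl k η ε) := by
  funext i
  by_cases h : i.val < k * l <;> simp [blockFlip, flipInitial, negCube, h]

lemma hdist_flipInitial_negCube {m K r : ℕ} (hm : m = K + r) (η : Fin m → Bool) :
    hdist m (flipInitial K η) (negCube η) ≤ (r : ℝ) / m := by
  have key : (Finset.univ.filter fun i => flipInitial K η i ≠ negCube η i).card ≤ r := by
    calc _ ≤ (Finset.Ico K m).card := by
          refine Finset.card_le_card_of_injOn (fun i : Fin m => i.val) ?_ ?_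
          · intro i hi
            simp only [Finset.coe_filter, Finset.mem_univ, true_and, Set.mem_ofPred_eq,
              Finset.coe_Ico, Set.mem_Ico] at hi ⊢
            refine ⟨?_, i.isLt⟩
            by_contra hlt
            exact hi (by simp [flipInitial, negCube, not_le.1 hlt])
          · exact Fin.val_injective.injOn
      _ = r := by rw [Nat.card_Ico]; omega
  unfold hdist
  gcongr

/-! ### The averaging argument -/

/-- Averaging the inequality for `2^l` over all block-repeated subcubes of `2^m`. -/
lemma sum_flip_le {l m : ℕ} (hl : 0 < l) (k : ℕ) {X Y : Type} [MetricSpace X] [MetricSpace Y]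
    (F : X → Y) {a : ℝ} (ha : 0 < a)
    (h : ∀ g : (Fin l → Bool) → X,
      cubeE l (fun ε => dist (F (g ε)) (F (g (negCube ε)))) ≤ a * cubeLip g)
    (f : (Fin m → Bool) → X) :
    cubeE m (fun η => dist (F (f η)) (F (f (flipInitial (k * l) η))))
      ≤ a * (k * l / m) * cubeLip f := by
  set D : (Fin m → Bool) → ℝ := fun η => dist (F (f η)) (F (f (flipInitial (k * l) η))) with hD
  have h1 : ∀ η : Fin m → Bool,
      ∑ ε : Fin l → Bool, D (blockFlip hl k η ε) ≤ a * (k * l / m) * cubeLip f * 2 ^ l := by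
    intro η
    have hg : cubeLip (fun ε => f (blockFlip hl k η ε)) ≤ cubeLip f * (k * l / m) := by
      refine cubeLip_le _ (mul_nonneg (cubeLip_nonneg f) (by positivity)) fun ε δ => ?_
      refine (dist_le_cubeLip f _ _).trans ?_
      rw [mul_assoc]
      exact mul_le_mul_of_nonneg_left (hdist_blockFlip_le hl k η ε δ) (cubeLip_nonneg f)
    have h2 := (h fun ε => f (blockFlip hl k η ε)).trans (mul_le_mul_of_nonneg_left hg ha.le)
    unfold cubeE at h2
    rw [div_le_iff₀ (by positivity)] at h2
    simp only [blockFlip_negCube] at h2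
    refine h2.trans (le_of_eq ?_)
    ring
  -- For fixed `ε`, `η ↦ blockFlip hl k η ε` is an involution, so it preserves sums over `2^m`.
  have h3 : ∀ ε : Fin l → Bool, ∑ η, D (blockFlip hl k η ε) = ∑ η, D η := fun ε =>
    Equiv.sum_comp (Function.Involutive.toPerm (fun η : Fin m → Bool => blockFlip hl k η ε)
      fun η => blockFlip_blockFlip hl k η ε) D
  have h4 : 2 ^ l * ∑ η, D η ≤ 2 ^ m * (a * (k * l / m) * cubeLip f * 2 ^ l) := by
    calc 2 ^ l * ∑ η, D η = ∑ ε : Fin l → Bool, ∑ η, D (blockFlip hl k η ε) := by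
          simp [h3]
      _ = ∑ η, ∑ ε : Fin l → Bool, D (blockFlip hl k η ε) := Finset.sum_comm
      _ ≤ ∑ _η : Fin m → Bool, a * (k * l / m) * cubeLip f * 2 ^ l :=
          Finset.sum_le_sum fun η _ => h1 η
      _ = _ := by simp
  unfold cubeE
  rw [div_le_iff₀ (by positivity)]
  refine le_of_mul_le_mul_left (h4.trans (le_of_eq ?_)) (show (0 : ℝ) < 2 ^ l by positivity)
  ring

/-- Almost-monotonicity of `a_m(𝓕)`: if `m = kl + r` with `0 ≤ r < l` and `m > l`, then
`a_m(𝓕) ≤ a_l(𝓕)·m/(lk) + 2λr/m`. -/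
theorem aConst_almost_monotone (𝓕 : Set MetricMap) (lam : ℝ) (hlam : 0 < lam)
    (hLip : ∀ G ∈ 𝓕, ∀ x y : G.X, dist (G.F x) (G.F y) ≤ lam * dist x y)
    (l m k r : ℕ) (hl : 0 < l) (hlm : l < m) (hm : m = k * l + r) (hr : r < l) :
    aConst 𝓕 m ≤ aConst 𝓕 l * m / (l * k) + 2 * lam * r / m := by
  have hk : 0 < k := by
    rcases Nat.eq_zero_or_pos k with h | h
    · subst h; omega
    · exact h
  have hm0 : 0 < m := hl.trans hlm
  have hlR : (0 : ℝ) < l := by exact_mod_cast hl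
  have hkR : (0 : ℝ) < k := by exact_mod_cast hk
  have hmR : (0 : ℝ) < m := by exact_mod_cast hm0
  have hklm : (k * l : ℝ) ≤ m := by rw [hm]; push_cast; linarith [Nat.cast_nonneg (α := ℝ) r]
  have hlk : (0 : ℝ) < l * k := by positivity
  have main : ∀ a : ℝ, 0 < a → (∀ G ∈ 𝓕, ∀ f : (Fin l → Bool) → G.X,
      cubeE l (fun ε => dist (G.F (f ε)) (G.F (f (negCube ε)))) ≤ a * cubeLip f) →
      aConst 𝓕 m ≤ a * (k * l / m) + lam * (r / m) := by
    intro a ha h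
    refine csInf_le ⟨0, fun x hx => hx.1.le⟩ ⟨by positivity, fun G hG f => ?_⟩
    have h1 := sum_flip_le hl k G.F ha (h G hG) f
    have h2 : cubeE m (fun η => dist (G.F (f (flipInitial (k * l) η))) (G.F (f (negCube η))))
        ≤ lam * (r / m) * cubeLip f := by
      refine cubeE_le fun η => (hLip G hG _ _).trans ?_
      have h3 := (dist_le_cubeLip f (flipInitial (k * l) η) (negCube η)).trans
        (mul_le_mul_of_nonneg_left (hdist_flipInitial_negCube hm η) (cubeLip_nonneg f))
      refine (mul_le_mul_of_nonneg_left h3 hlam.le).trans (le_of_eq ?_)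
      ring
    have h3 : cubeE m (fun η => dist (G.F (f η)) (G.F (f (negCube η)))) ≤
        cubeE m (fun η => dist (G.F (f η)) (G.F (f (flipInitial (k * l) η)))) +
        cubeE m (fun η => dist (G.F (f (flipInitial (k * l) η))) (G.F (f (negCube η)))) := by
      unfold cubeE
      rw [← add_div, ← Finset.sum_add_distrib]
      gcongr
      exact dist_triangle _ _ _
    linarith
  have hbound : (aConst 𝓕 m - 2 * lam * r / m) * (l * k) / m ≤ aConst 𝓕 l := by
    refine le_csInf ⟨lam, hlam, lam_admissible hlam hLip l⟩ ?_
    rintro a ⟨ha, h⟩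
    have h1 := main a ha h
    have h2 : (k * l / m : ℝ) ≤ 1 := div_le_one_of_le₀ hklm hmR.le
    have h3 : (1 : ℝ) ≤ m / (l * k) := by rw [one_le_div hlk]; linarith
    have h4 : a * (k * l / m) ≤ a * (m / (l * k)) :=
      mul_le_mul_of_nonneg_left (h2.trans h3) ha.le
    have h5 : 0 ≤ lam * (r / m) := by positivity
    have h6 : 2 * lam * r / m = 2 * (lam * (r / m)) := by ring
    rw [div_le_iff₀ hmR, ← le_div_iff₀ hlk, mul_div_assoc a, h6]
    linarith
  rw [div_le_iff₀ hmR, ← le_div_iff₀ hlk] at hbound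
  linarith
end
end
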